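/- Sandwich lemma between cross-conformal and shortcut sets: fix training data T_n and a feature x_{n+1}. Then for all α ∈ ℝ, ε > 0, δ_1 ∈ ℝ and δ_2 > 0: PS^{cc}_{α+ε}(δ_1) ⊆ PS^{sc}_α(δ_1 + δ_2) ∪ Δ_n(ε, δ_2) and PS^{sc}_{α+ε}(δ_1) ⊆ PS^{cc}_α(δ_1 + δ_2) ∪ Δ_n(ε, δ_2), where Δ_n(ε, δ) = { y ∈ Y_n : Σ_{i=1}^n 1{ |C_n((y, x_{n+1}), T_n) − C_{n−1}((y, x_{n+1}), T_n∖t_i)| ≥ δ } > nε − 1 }. -/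

import Mathlib

open MeasureTheory Filter Set

noncomputable section

/-- The space of a single feature-response pair: response in `ℝ`, features in `ℝ^(p n)`. -/
abbrev Zn (p : ℕ → ℕ) (n : ℕ) : Type := ℝ × (Fin (p n) → ℝ)

/-- The `α`-quantile `Q_α(F) = inf {x : F x ≥ α}` of a cdf `F`, as an extended real
(with `inf ∅ = +∞`). -/
def quantile (F : ℝ → ℝ) (α : ℝ) : EReal :=
  sInf ((fun x : ℝ => (x : EReal)) '' {x : ℝ | α ≤ F x})

/-- A conformity score family: measurable in both arguments and symmetric under permutations of
the second (tuple) argument. -/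
structure IsScoreFamily (p : ℕ → ℕ)
    (C : (n m : ℕ) → Zn p n → (Fin m → Zn p n) → ℝ) : Prop where
  meas : ∀ n m, Measurable (fun q : Zn p n × (Fin m → Zn p n) => C n m q.1 q.2)
  symm : ∀ n m z (v : Fin m → Zn p n) (π : Equiv.Perm (Fin m)), C n m z (v ∘ π) = C n m z v

/-- The training data `T_n ∖ t_i` (0-based `i`) built from the fixed points `z 0, …, z (n-1)`. -/
def looPts (p : ℕ → ℕ) (n : ℕ) (z : ℕ → Zn p n) (i : ℕ) : Fin (n - 1) → Zn p n :=
  fun j => if (j : ℕ) < i then z (j : ℕ) else z ((j : ℕ) + 1)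

/-- The `δ`-distorted shortcut prediction set for fixed training data `z 0, …, z (n-1)` and
feature `x`. -/
def psSCPts (p : ℕ → ℕ) (Y : ℕ → Set ℝ) (n : ℕ) (z : ℕ → Zn p n) (x : Fin (p n) → ℝ)
    (C : (n m : ℕ) → Zn p n → (Fin m → Zn p n) → ℝ) (α δ : ℝ) : Set ℝ :=
  {y | y ∈ Y n ∧
    (C n n (y, x) (fun i : Fin n => z (i : ℕ)) : EReal)
      ≤ quantile
          (fun s => (∑ i : Fin n,
            if C n (n - 1) (z (i : ℕ)) (looPts p n z (i : ℕ)) ≤ s then (1 : ℝ) else 0) / n)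
          (1 - α) + (δ : EReal)}

/-- The `δ`-inflated `n`-fold cross-conformal prediction set for fixed training data
`z 0, …, z (n-1)` and feature `x`. -/
def psCCPts (p : ℕ → ℕ) (Y : ℕ → Set ℝ) (n : ℕ) (z : ℕ → Zn p n) (x : Fin (p n) → ℝ)
    (C : (n m : ℕ) → Zn p n → (Fin m → Zn p n) → ℝ) (α δ : ℝ) : Set ℝ :=
  {y | y ∈ Y n ∧ α * (n + 1) <
    1 + ∑ i : Fin n,
      if C n (n - 1) (y, x) (looPts p n z (i : ℕ))
          ≤ C n (n - 1) (z (i : ℕ)) (looPts p n z (i : ℕ)) + δ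
      then (1 : ℝ) else 0}

/-- The exceptional set `Δ_n(ε, δ)`. -/
def deltaPts (p : ℕ → ℕ) (Y : ℕ → Set ℝ) (n : ℕ) (z : ℕ → Zn p n) (x : Fin (p n) → ℝ)
    (C : (n m : ℕ) → Zn p n → (Fin m → Zn p n) → ℝ) (ε δ : ℝ) : Set ℝ :=
  {y | y ∈ Y n ∧ (n : ℝ) * ε - 1 <
    ∑ i : Fin n,
      if δ ≤ |C n n (y, x) (fun i' : Fin n => z (i' : ℕ))
          - C n (n - 1) (y, x) (looPts p n z (i : ℕ))|
      then (1 : ℝ) else 0}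

/-!
Both prediction sets are governed by an exceedance count. Write `rᵢ = C_{n-1}(tᵢ, T_n ∖ tᵢ)`,
`kᵢ = C_{n-1}((y, x), T_n ∖ tᵢ)` and `c = C_n((y, x), T_n)`. A point `y ∈ Y_n` lies in
`PS^{cc}_α(δ)` iff `#{i | rᵢ + δ < kᵢ} < (1 - α)(n + 1)`, by complementation. For `n > 0` it lies in
`PS^{sc}_α(δ)` iff `#{i | rᵢ + δ < c} < (1 - α) n`, since the empirical cdf is a step function that
equals `#{i | rᵢ < c - δ} / n` just to the left of `c - δ`.

Exchanging `kᵢ` and `c` while raising `δ₁` to `δ₁ + δ₂` adds at most `#{i | δ₂ ≤ |c - kᵢ|}`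
exceedances, which outside `Δ_n(ε, δ₂)` is at most `n ε - 1`. Lowering the level from `α + ε` to `α`
absorbs this, except in the first inclusion when `α + ε < 0`; then `α < 0` and the trivial bound
`n < (1 - α) n` suffices.
-/

open scoped Finset

section Counting

lemma exists_lt_forall_le_of_lt {ι α : Type*} [Finite ι] [LinearOrder α] [NoMinOrder α]
    (r : ι → α) (b : α) : ∃ s < b, ∀ i, r i < b → r i ≤ s := by
  obtain ⟨⟨s, hs⟩, hle⟩ := Finite.exists_le fun i : {i // r i < b} => (⟨r i, i.2⟩ : Iio b)
  exact ⟨s, hs, fun i hi => hle ⟨i, hi⟩⟩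

lemma card_add_lt_le_card_add_lt_add_card_le_abs_sub {ι G : Type*} [Fintype ι] [AddCommGroup G]
    [LinearOrder G] [IsOrderedAddMonoid G] (r u v : ι → G) (δ₁ δ₂ : G) :
    #{i | r i + (δ₁ + δ₂) < u i} ≤ #{i | r i + δ₁ < v i} + #{i | δ₂ ≤ |u i - v i|} := by
  classical
  have exceeds_or_far (i : ι) (hi : r i + (δ₁ + δ₂) < u i) :
      r i + δ₁ < v i ∨ δ₂ ≤ |u i - v i| := by
    by_contra! ⟨hv, hd⟩
    refine hi.not_ge ?_
    calc
      u i ≤ δ₂ + v i := sub_le_iff_le_add.1 ((le_abs_self _).trans hd.le)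
      _ ≤ δ₂ + (r i + δ₁) := by gcongr
      _ = r i + (δ₁ + δ₂) := by abel
  calc
    #{i | r i + (δ₁ + δ₂) < u i} ≤ #{i | r i + δ₁ < v i ∨ δ₂ ≤ |u i - v i|} :=
      Finset.card_le_card (Finset.monotone_filter_right _ fun i _ => exceeds_or_far i)
    _ ≤ #{i | r i + δ₁ < v i} + #{i | δ₂ ≤ |u i - v i|} := by
      rw [Finset.filter_or]
      exact Finset.card_union_le _ _

end Counting

section Quantile

lemma coe_le_quantile_add_coe_iff {F : ℝ → ℝ} {a c d : ℝ} :
    (c : EReal) ≤ quantile F a + d ↔ ∀ s, a ≤ F s → c ≤ s + d := by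
  rw [← EReal.sub_le_iff_le_add (.inl (EReal.coe_ne_bot d)) (.inl (EReal.coe_ne_top d)),
    ← EReal.coe_sub, quantile, le_sInf_iff]
  simp only [forall_mem_image, mem_ofPred_eq, EReal.coe_le_coe_iff, sub_le_iff_le_add]

variable {ι : Type*} [Fintype ι]

/-- The empirical cdf of a finite family of reals, the `Ĝ` of the shortcut set; it is the junk
value `0` when the family is empty. -/
def empiricalCDF (r : ι → ℝ) (s : ℝ) : ℝ := #{i | r i ≤ s} / Fintype.card ι

lemma coe_le_quantile_empiricalCDF_add_coe_iff [Nonempty ι] {r : ι → ℝ} {a c d : ℝ} :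
    (c : EReal) ≤ quantile (empiricalCDF r) a + d ↔
      (#{i | r i + d < c} : ℝ) < a * Fintype.card ι := by
  have hcard : (0 : ℝ) < Fintype.card ι := mod_cast Fintype.card_pos
  simp only [coe_le_quantile_add_coe_iff, empiricalCDF, le_div_iff₀ hcard]
  constructor
  · intro h
    obtain ⟨s, hs, hrs⟩ := exists_lt_forall_le_of_lt r (c - d)
    have hcount : (#{i | r i + d < c} : ℝ) ≤ #{i | r i ≤ s} := by
      gcongr with i
      exact fun hi => hrs i (lt_sub_iff_add_lt.2 hi)
    exact hcount.trans_lt (lt_of_not_ge fun hle => (lt_sub_iff_add_lt.1 hs).not_ge (h s hle))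
  · intro h s hs
    by_contra! hsc
    have hcount : (#{i | r i ≤ s} : ℝ) ≤ #{i | r i + d < c} := by
      gcongr with i
      exact fun hi => (add_le_add_left hi d).trans_lt hsc
    exact (hs.trans hcount).not_gt h

end Quantile

section PredictionSets

variable {p : ℕ → ℕ} {Y : ℕ → Set ℝ} {n : ℕ} {z : ℕ → Zn p n} {x : Fin (p n) → ℝ}
  {C : (n m : ℕ) → Zn p n → (Fin m → Zn p n) → ℝ} {α ε δ δ₁ δ₂ y : ℝ}

/-- The leave-one-out score `C_{n-1}(w, T_n ∖ tᵢ)` of a data point `w`, with `i` counted from `0`.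
Taking `w = tᵢ` gives the calibration scores, `w = (y, x_{n+1})` the test scores. -/
def looScore (C : (n m : ℕ) → Zn p n → (Fin m → Zn p n) → ℝ) (z : ℕ → Zn p n) (w : Zn p n)
    (i : ℕ) : ℝ :=
  C n (n - 1) w (looPts p n z i)

lemma mem_psSCPts_iff (hn : n ≠ 0) :
    y ∈ psSCPts p Y n z x C α δ ↔ y ∈ Y n ∧
      (#{i : Fin n | looScore C z (z i) i + δ < C n n (y, x) fun j => z j} : ℝ)
        < (1 - α) * n := by
  have : Nonempty (Fin n) := Fin.pos_iff_nonempty.1 (Nat.pos_of_ne_zero hn)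
  have hcdf : empiricalCDF (fun i : Fin n => looScore C z (z i) i) =
      fun s => (∑ i : Fin n, if looScore C z (z i) i ≤ s then (1 : ℝ) else 0) / n :=
    funext fun s => by rw [empiricalCDF, Finset.sum_boole, Fintype.card_fin]
  have hquantile := coe_le_quantile_empiricalCDF_add_coe_iff
    (r := fun i : Fin n => looScore C z (z i) i) (a := 1 - α) (c := C n n (y, x) fun j => z j)
    (d := δ)
  rw [hcdf, Fintype.card_fin] at hquantile
  exact and_congr_right fun _ => hquantile

lemma mem_psCCPts_iff :
    y ∈ psCCPts p Y n z x C α δ ↔ y ∈ Y n ∧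
      (#{i : Fin n | looScore C z (z i) i + δ < looScore C z (y, x) i} : ℝ)
        < (1 - α) * (n + 1) := by
  have hcompl : (#{i : Fin n | looScore C z (y, x) i ≤ looScore C z (z i) i + δ} : ℝ)
      + #{i : Fin n | looScore C z (z i) i + δ < looScore C z (y, x) i} = n := by
    have h := Finset.card_filter_add_card_filter_not (s := Finset.univ)
      fun i : Fin n => looScore C z (y, x) i ≤ looScore C z (z i) i + δ
    simp only [not_le, Finset.card_fin] at h
    exact_mod_cast h
  change (y ∈ Y n ∧ α * (n + 1) < 1 + ∑ i : Fin n,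
    if looScore C z (y, x) i ≤ looScore C z (z i) i + δ then (1 : ℝ) else 0) ↔ _
  rw [Finset.sum_boole]
  refine and_congr_right fun _ => ?_
  constructor <;> intro h <;> linarith

lemma card_le_of_notMem_deltaPts (hy : y ∈ Y n) (hΔ : y ∉ deltaPts p Y n z x C ε δ) :
    (#{i : Fin n | δ ≤ |(C n n (y, x) fun j => z j) - looScore C z (y, x) i|} : ℝ)
      ≤ n * ε - 1 := by
  rw [← Finset.sum_boole]
  exact not_lt.1 fun hfar => hΔ ⟨hy, hfar⟩

lemma pos_of_notMem_deltaPts (hy : y ∈ Y n) (hΔ : y ∉ deltaPts p Y n z x C ε δ) :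
    0 < n ∧ 0 < ε := by
  have hfar := card_le_of_notMem_deltaPts hy hΔ
  have hnε : 0 < n * ε := by linarith [(Nat.cast_nonneg _).trans hfar]
  exact ⟨Nat.pos_of_ne_zero fun h => by simp [h] at hnε, pos_of_mul_pos_right hnε n.cast_nonneg⟩

lemma psCCPts_subset_psSCPts_union_deltaPts :
    psCCPts p Y n z x C (α + ε) δ₁
      ⊆ psSCPts p Y n z x C α (δ₁ + δ₂) ∪ deltaPts p Y n z x C ε δ₂ := by
  refine fun y hcc => or_iff_not_imp_right.2 fun hΔ => ?_
  obtain ⟨hy, hcc⟩ := mem_psCCPts_iff.1 hcc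
  have hfar := card_le_of_notMem_deltaPts hy hΔ
  obtain ⟨hn, hε⟩ := pos_of_notMem_deltaPts hy hΔ
  refine (mem_psSCPts_iff hn.ne').2 ⟨hy, ?_⟩
  set c := C n n (y, x) fun j => z j
  have hn' : (0 : ℝ) < n := mod_cast hn
  rcases lt_or_ge (α + ε) 0 with hneg | hnonneg
  · calc
      (#{i : Fin n | looScore C z (z i) i + (δ₁ + δ₂) < c} : ℝ) ≤ n := by
        exact_mod_cast (Finset.card_le_univ _).trans_eq (Fintype.card_fin n)
      _ < (1 - α) * n := lt_mul_of_one_lt_left hn' (by linarith)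
  · calc
      (#{i : Fin n | looScore C z (z i) i + (δ₁ + δ₂) < c} : ℝ)
          ≤ #{i : Fin n | looScore C z (z i) i + δ₁ < looScore C z (y, x) i}
            + #{i : Fin n | δ₂ ≤ |c - looScore C z (y, x) i|} := by
        exact_mod_cast card_add_lt_le_card_add_lt_add_card_le_abs_sub _ (fun _ => c) _ _ _
      _ < (1 - (α + ε)) * (n + 1) + (n * ε - 1) := add_lt_add_of_lt_of_le hcc hfar
      _ ≤ (1 - α) * n := by linarith

lemma psSCPts_subset_psCCPts_union_deltaPts :
    psSCPts p Y n z x C (α + ε) δ₁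
      ⊆ psCCPts p Y n z x C α (δ₁ + δ₂) ∪ deltaPts p Y n z x C ε δ₂ := by
  refine fun y hsc => or_iff_not_imp_right.2 fun hΔ => ?_
  have hy : y ∈ Y n := hsc.1
  have hfar := card_le_of_notMem_deltaPts hy hΔ
  obtain ⟨hn, hε⟩ := pos_of_notMem_deltaPts hy hΔ
  have hsc := ((mem_psSCPts_iff hn.ne').1 hsc).2
  refine mem_psCCPts_iff.2 ⟨hy, ?_⟩
  set c := C n n (y, x) fun j => z j
  have hlevel : 0 < 1 - (α + ε) :=
    pos_of_mul_pos_left ((Nat.cast_nonneg _).trans_lt hsc) n.cast_nonneg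
  calc
    (#{i : Fin n | looScore C z (z i) i + (δ₁ + δ₂) < looScore C z (y, x) i} : ℝ)
        ≤ #{i : Fin n | looScore C z (z i) i + δ₁ < c}
          + #{i : Fin n | δ₂ ≤ |c - looScore C z (y, x) i|} := by
      simp only [abs_sub_comm c]
      exact_mod_cast card_add_lt_le_card_add_lt_add_card_le_abs_sub _ _ (fun _ => c) _ _
    _ < (1 - (α + ε)) * n + (n * ε - 1) := add_lt_add_of_lt_of_le hsc hfar
    _ ≤ (1 - α) * (n + 1) := by linarith

end PredictionSets

theorem crossConformal_shortcut_sandwich_general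
    (p : ℕ → ℕ) (Y : ℕ → Set ℝ) (n : ℕ) (z : ℕ → Zn p n) (x : Fin (p n) → ℝ)
    (C : (n m : ℕ) → Zn p n → (Fin m → Zn p n) → ℝ) (α ε δ₁ δ₂ : ℝ) :
    psCCPts p Y n z x C (α + ε) δ₁
        ⊆ psSCPts p Y n z x C α (δ₁ + δ₂) ∪ deltaPts p Y n z x C ε δ₂
    ∧ psSCPts p Y n z x C (α + ε) δ₁
        ⊆ psCCPts p Y n z x C α (δ₁ + δ₂) ∪ deltaPts p Y n z x C ε δ₂ :=
  ⟨psCCPts_subset_psSCPts_union_deltaPts, psSCPts_subset_psCCPts_union_deltaPts⟩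

/-- sandwich lemma between cross-conformal and shortcut sets: for fixed
training data and feature vector, for all `α ∈ ℝ`, `ε > 0`, `δ₁ ∈ ℝ` and `δ₂ > 0`:
`PS^{cc}_{α+ε}(δ₁) ⊆ PS^{sc}_α(δ₁ + δ₂) ∪ Δ_n(ε, δ₂)` and
`PS^{sc}_{α+ε}(δ₁) ⊆ PS^{cc}_α(δ₁ + δ₂) ∪ Δ_n(ε, δ₂)`. -/
theorem crossConformal_shortcut_sandwich
    (p : ℕ → ℕ) (Y : ℕ → Set ℝ) (n : ℕ) (z : ℕ → Zn p n) (x : Fin (p n) → ℝ)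
    (C : (n m : ℕ) → Zn p n → (Fin m → Zn p n) → ℝ)
    (hC : IsScoreFamily p C)
    (α : ℝ) (ε : ℝ) (hε : 0 < ε) (δ₁ : ℝ) (δ₂ : ℝ) (hδ₂ : 0 < δ₂) :
    psCCPts p Y n z x C (α + ε) δ₁
        ⊆ psSCPts p Y n z x C α (δ₁ + δ₂) ∪ deltaPts p Y n z x C ε δ₂
    ∧ psSCPts p Y n z x C (α + ε) δ₁
        ⊆ psCCPts p Y n z x C α (δ₁ + δ₂) ∪ deltaPts p Y n z x C ε δ₂ :=
  crossConformal_shortcut_sandwich_general p Y n z x C α ε δ₁ δ₂
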